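/- arXiv:1608.08443 — 3 statements merged into one kernel-verified Lean document; each statement's English description precedes it below -/
import Mathlib

section
/- Let s ∈ (0,1), let (a,b) be a bounded open interval, and let u ∈ C²₀(a,b) be such that |u'| is integrable on (a,b). Fix x ∈ ℝ with x ∉ {a,b}. Then the limit defining (−Δ)^s u(x) exists and: (i) if s ≠ 1/2, the function F(x) = ∫_a^b |x−y|^{1−2s} u'(y) dy is differentiable at x and (−Δ)^s u(x) = C_s F'(x); (ii) if s = 1/2, the function G(x) = ∫_a^b ln|x−y| u'(y) dy is differentiable at x and (−Δ)^{1/2} u(x) = (1/π) G'(x). -/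
open MeasureTheory Filter Set

/-- The normalization constant `C₁(s) = 2^{2s} s Γ(s+1/2) / (√π Γ(1−s))`. -/
noncomputable def C1 (s : ℝ) : ℝ :=
  2 ^ (2 * s) * s * Real.Gamma (s + 1 / 2) / (Real.sqrt Real.pi * Real.Gamma (1 - s))

/-- The constant `C_s = C₁(s)/(2s(1−2s))`. -/
noncomputable def Cs (s : ℝ) : ℝ := C1 s / (2 * s * (1 - 2 * s))

/-- `HasFracLap s u x V` means the limit defining `(−Δ)^s u (x)` exists and equals `V`. -/
def HasFracLap (s : ℝ) (u : ℝ → ℝ) (x V : ℝ) : Prop :=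
  Filter.Tendsto
    (fun ε : ℝ => C1 s * ∫ y in {y : ℝ | ε ≤ |y|}, (u x - u (x - y)) * |y| ^ (-1 - 2 * s))
    (nhdsWithin 0 (Set.Ioi 0)) (nhds V)

/-!
Write `K` for `|z| ^ (1 - 2 * s)`, or `log |z|` when `s = 1 / 2`; then `K' z` is a nonzero multiple
of `z * |z| ^ (-1 - 2 * s)`. The derivative of `K ⋆ u'` at `x` and the fractional Laplacian of `u`
at `x` are both multiples of the principal value of `∫ K' z * u' (x - z)`.

For the fractional Laplacian, integrate by parts on `{ε ≤ |y|}`: the boundary terms form a second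
difference of `u` divided by `ε ^ (2 * s)`, which tends to `0` because `u` is `C²` at `x`.

For the convolution, split `u'` into a compactly supported `C¹` function and an integrable function
vanishing near `x`. The kernel is smooth where it meets the second part, so it can be differentiated
under the integral. For the first part the derivative falls on the function, and is moved back to
`K` by parts on `{ε ≤ |z|}`; since `K` is even, the boundary terms combine into `K ε` times a
symmetric difference, which is `o(1)`.
-/

open Topology

section ExteriorIntegrals

variable {E : Type*} [NormedAddCommGroup E] [NormedSpace ℝ E]

lemma setOf_le_abs_eq_Iic_union_Ici (ε : ℝ) : {y : ℝ | ε ≤ |y|} = Iic (-ε) ∪ Ici ε := by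
  ext y
  rw [mem_ofPred_eq, mem_union, mem_Iic, mem_Ici, le_abs, le_neg, or_comm]

lemma isClosed_setOf_le_abs (ε : ℝ) : IsClosed {y : ℝ | ε ≤ |y|} :=
  isClosed_le continuous_const continuous_abs

lemma ne_zero_of_le_abs {ε y : ℝ} (hε : 0 < ε) (hy : ε ≤ |y|) : y ≠ 0 :=
  abs_pos.1 (hε.trans_le hy)

lemma tendsto_integral_le_abs {f : ℝ → E} (hf : Integrable f) :
    Tendsto (fun ε => ∫ y in {y : ℝ | ε ≤ |y|}, f y) (𝓝[>] 0) (𝓝 (∫ y, f y)) := by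
  have hcover : AECover volume (𝓝[>] (0 : ℝ)) fun ε => {y : ℝ | ε ≤ |y|} :=
    { ae_eventually_mem := by
        filter_upwards [Measure.ae_ne volume 0] with y hy
        filter_upwards [Ioo_mem_nhdsGT (abs_pos.2 hy)] with ε hε using hε.2.le
      measurableSet := fun ε => (isClosed_setOf_le_abs ε).measurableSet }
  exact hcover.integral_tendsto_of_countably_generated hf

lemma integrableOn_le_abs_rpow {ε q : ℝ} (hε : 0 < ε) (hq : q < -1) :
    IntegrableOn (fun y : ℝ => |y| ^ q) {y | ε ≤ |y|} := by
  have hright : IntegrableOn (fun y : ℝ => |y| ^ q) (Ici ε) := by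
    rw [integrableOn_Ici_iff_integrableOn_Ioi]
    refine (integrableOn_Ioi_rpow_of_lt hq hε).congr_fun (fun y hy => ?_) measurableSet_Ioi
    simp only [abs_of_pos (hε.trans hy)]
  have hleft : IntegrableOn (fun y : ℝ => |y| ^ q) (Iic (-ε)) := by
    simpa using hright.comp_neg
  rw [setOf_le_abs_eq_Iic_union_Ici]
  exact hleft.union hright

lemma integral_Ioi_of_hasDerivAt_off_countable_of_tendsto [CompleteSpace E] {f f' : ℝ → E} {a : ℝ}
    {m : E} {N : Set ℝ} (hN : N.Countable) (hf : ContinuousOn f (Ici a))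
    (hderiv : ∀ y ∈ Ioi a \ N, HasDerivAt f (f' y) y) (hf'int : IntegrableOn f' (Ioi a))
    (hlim : Tendsto f atTop (𝓝 m)) : ∫ y in Ioi a, f' y = m - f a := by
  refine tendsto_nhds_unique (intervalIntegral_tendsto_integral_Ioi a hf'int tendsto_id) ?_
  refine (hlim.sub_const (f a)).congr' ?_
  filter_upwards [eventually_ge_atTop a] with b hab
  refine (integral_eq_of_hasDerivAt_off_countable f f' hN ?_ (fun y hy => ?_) ?_).symm
  · exact hf.mono (uIcc_of_le hab ▸ Icc_subset_Ici_self)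
  · rw [min_eq_left hab] at hy
    exact hderiv y ⟨hy.1.1, hy.2⟩
  · rw [intervalIntegrable_iff_integrableOn_Ioc_of_le hab]
    exact hf'int.mono_set Ioc_subset_Ioi_self

lemma integral_Iic_of_hasDerivAt_off_countable_of_tendsto [CompleteSpace E] {f f' : ℝ → E} {a : ℝ}
    {m : E} {N : Set ℝ} (hN : N.Countable) (hf : ContinuousOn f (Iic a))
    (hderiv : ∀ y ∈ Iio a \ N, HasDerivAt f (f' y) y) (hf'int : IntegrableOn f' (Iic a))
    (hlim : Tendsto f atBot (𝓝 m)) : ∫ y in Iic a, f' y = f a - m := by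
  refine tendsto_nhds_unique (intervalIntegral_tendsto_integral_Iic a hf'int tendsto_id) ?_
  refine (hlim.const_sub (f a)).congr' ?_
  filter_upwards [eventually_le_atBot a] with b hba
  refine (integral_eq_of_hasDerivAt_off_countable f f' hN ?_ (fun y hy => ?_) ?_).symm
  · exact hf.mono (uIcc_of_le hba ▸ Icc_subset_Iic_self)
  · rw [max_eq_right hba] at hy
    exact hderiv y ⟨hy.1.2, hy.2⟩
  · rw [intervalIntegrable_iff_integrableOn_Ioc_of_le hba]
    exact hf'int.mono_set Ioc_subset_Iic_self

lemma integral_le_abs_of_hasDerivAt_off_countable [CompleteSpace E] {f f' : ℝ → E} {ε : ℝ}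
    {N : Set ℝ} (hε : 0 ≤ ε) (hN : N.Countable) (hf : ContinuousOn f {y | ε ≤ |y|})
    (hderiv : ∀ y, ε ≤ |y| → y ∉ N → HasDerivAt f (f' y) y)
    (hf'int : IntegrableOn f' {y | ε ≤ |y|}) (hlim : Tendsto f (cocompact ℝ) (𝓝 0)) :
    ∫ y in {y : ℝ | ε ≤ |y|}, f' y = f (-ε) - f ε := by
  simp only [setOf_le_abs_eq_Iic_union_Ici] at hf hf'int ⊢
  have hright := integral_Ioi_of_hasDerivAt_off_countable_of_tendsto hN
    (hf.mono subset_union_right)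
    (fun y hy => hderiv y (le_abs.2 (Or.inl (le_of_lt hy.1))) hy.2)
    (hf'int.mono_set (Ioi_subset_Ici_self.trans subset_union_right))
    (hlim.mono_left atTop_le_cocompact)
  have hleft := integral_Iic_of_hasDerivAt_off_countable_of_tendsto hN
    (hf.mono subset_union_left)
    (fun y hy => hderiv y (le_abs.2 (Or.inr (le_neg.1 (le_of_lt hy.1)))) hy.2)
    (hf'int.mono_set subset_union_left) (hlim.mono_left atBot_le_cocompact)
  have hae : (Iic (-ε) ∪ Ici ε : Set ℝ) =ᵐ[volume] (Iic (-ε) ∪ Ioi ε : Set ℝ) :=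
    (ae_eq_refl _).union Ioi_ae_eq_Ici.symm
  have hdisj : Disjoint (Iic (-ε)) (Ioi ε) := Iic_disjoint_Ioi (by linarith)
  rw [setIntegral_congr_set hae, setIntegral_union hdisj measurableSet_Ioi
    (hf'int.mono_set subset_union_left)
    (hf'int.mono_set (Ioi_subset_Ici_self.trans subset_union_right)), hleft, hright]
  abel

lemma integral_le_abs_mul_deriv_eq_deriv_mul {f f' g g' : ℝ → ℝ} {ε : ℝ} {N : Set ℝ}
    (hε : 0 ≤ ε) (hN : N.Countable)
    (hf : ContinuousOn f {y | ε ≤ |y|}) (hg : ContinuousOn g {y | ε ≤ |y|})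
    (hff' : ∀ y, ε ≤ |y| → y ∉ N → HasDerivAt f (f' y) y)
    (hgg' : ∀ y, ε ≤ |y| → y ∉ N → HasDerivAt g (g' y) y)
    (hfg' : IntegrableOn (fun y => f y * g' y) {y | ε ≤ |y|})
    (hf'g : IntegrableOn (fun y => f' y * g y) {y | ε ≤ |y|})
    (hlim : Tendsto (fun y => f y * g y) (cocompact ℝ) (𝓝 0)) :
    ∫ y in {y : ℝ | ε ≤ |y|}, f y * g' y =
      f (-ε) * g (-ε) - f ε * g ε - ∫ y in {y : ℝ | ε ≤ |y|}, f' y * g y := by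
  have hftc := integral_le_abs_of_hasDerivAt_off_countable hε hN (hf.mul hg)
    (fun y hy hyN => (hff' y hy hyN).mul (hgg' y hy hyN)) (hf'g.add hfg') hlim
  rw [integral_add hf'g hfg'] at hftc
  simp only [Pi.mul_apply] at hftc
  linarith

end ExteriorIntegrals

section CompactSupport

lemma integrableOn_mul_of_continuousOn_inter_tsupport {X : Type*} [TopologicalSpace X] [T2Space X]
    [MeasurableSpace X] [OpensMeasurableSpace X] {μ : Measure X} {g v : X → ℝ} {S : Set X}
    (hS : IsClosed S) (hg : ContinuousOn g (S ∩ tsupport v)) (hv : Integrable v μ)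
    (hvc : HasCompactSupport v) : IntegrableOn (fun y => g y * v y) S μ := by
  have hcompact : IsCompact (S ∩ tsupport v) := hvc.isCompact.inter_left hS
  refine (hv.integrableOn.continuousOn_mul hg hcompact).of_forall_sdiff_eq_zero hS.measurableSet ?_
  rintro y ⟨hyS, hy⟩
  rw [image_eq_zero_of_notMem_tsupport fun hyv => hy ⟨hyS, hyv⟩, mul_zero]

lemma exists_contDiff_hasCompactSupport_eventuallyEq {E F : Type*} [NormedAddCommGroup E]
    [NormedSpace ℝ E] [FiniteDimensional ℝ E] [NormedAddCommGroup F] [NormedSpace ℝ F] {n : ℕ}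
    {v : E → F} {x : E} (hv : ContDiffAt ℝ n v x) :
    ∃ w : E → F, ContDiff ℝ n w ∧ HasCompactSupport w ∧ w =ᶠ[𝓝 x] v := by
  obtain ⟨r, hr, hball⟩ := Metric.eventually_nhds_iff_ball.1 (hv.eventually (by simp))
  let χ : ContDiffBump x := ⟨r / 4, r / 2, by positivity, by linarith⟩
  refine ⟨fun y => χ y • v y, contDiff_iff_contDiffAt.2 fun y => ?_,
    χ.hasCompactSupport.smul_right, ?_⟩
  · by_cases hy : y ∈ Metric.ball x r
    · exact χ.contDiffAt.smul (hball y hy)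
    · have hyχ : y ∉ tsupport χ := fun h =>
        hy (Metric.closedBall_subset_ball (half_lt_self hr) (χ.tsupport_eq ▸ h))
      refine (contDiffAt_const (c := 0)).congr_of_eventuallyEq ?_
      filter_upwards [notMem_tsupport_iff_eventuallyEq.1 hyχ] with z hz
      rw [hz, Pi.zero_apply, zero_smul]
  · filter_upwards [χ.eventuallyEq_one] with y hy
    rw [hy, Pi.one_apply, one_smul]

lemma contDiffAt_of_notMem_frontier {E F : Type*} [NormedAddCommGroup E] [NormedSpace ℝ E]
    [NormedAddCommGroup F] [NormedSpace ℝ F] {n : WithTop ℕ∞} {u : E → F} {Ω : Set E} {x : E}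
    (hu : ContDiffOn ℝ n u Ω) (hzero : ∀ y ∉ Ω, u y = 0) (hx : x ∉ frontier Ω) :
    ContDiffAt ℝ n u x := by
  rw [← mem_compl_iff, compl_frontier_eq_union_interior] at hx
  rcases hx with hx | hx
  · exact hu.contDiffAt (mem_interior_iff_mem_nhds.1 hx)
  · refine (contDiffAt_const (c := 0)).congr_of_eventuallyEq ?_
    filter_upwards [mem_interior_iff_mem_nhds.1 hx] with y hy using hzero y hy

end CompactSupport

section SymmetricDifferences

lemma tendsto_mul_symmetric_difference {K v : ℝ → ℝ} {x : ℝ}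
    (hK : Tendsto (fun ε => ε * K ε) (𝓝[>] 0) (𝓝 0)) (hv : DifferentiableAt ℝ v x) :
    Tendsto (fun ε => K ε * (v (x - ε) - v (x + ε))) (𝓝[>] 0) (𝓝 0) := by
  have hderiv : HasDerivAt (fun ε => v (x - ε) - v (x + ε)) (-deriv v x - deriv v x) 0 :=
    (HasDerivAt.comp_const_sub x 0 (by simpa using hv.hasDerivAt)).sub
      (HasDerivAt.comp_const_add x 0 (by simpa using hv.hasDerivAt))
  have hslope := (hasDerivAt_iff_tendsto_slope.1 hderiv).mono_left
    (nhdsWithin_mono 0 fun ε (hε : 0 < ε) => hε.ne')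
  have hmul := hK.mul hslope
  rw [zero_mul] at hmul
  refine hmul.congr' ?_
  filter_upwards [self_mem_nhdsWithin] with ε hε
  have hε0 : ε ≠ 0 := ne_of_gt hε
  simp only [slope_def_field, sub_zero, add_zero, sub_self]
  field_simp

lemma tendsto_rpow_nhdsGT_zero {p : ℝ} (hp : 0 < p) :
    Tendsto (fun ε : ℝ => ε ^ p) (𝓝[>] 0) (𝓝 0) := by
  have h := (Real.continuousAt_rpow_const 0 p (Or.inr hp.le)).tendsto
  rw [Real.zero_rpow hp.ne'] at h
  exact h.mono_left nhdsWithin_le_nhds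

lemma tendsto_second_difference_div_rpow {u : ℝ → ℝ} {x p : ℝ} (hp : 0 < p) (hp2 : p < 2)
    (hu : ∀ᶠ y in 𝓝 x, DifferentiableAt ℝ u y) (hu' : DifferentiableAt ℝ (deriv u) x) :
    Tendsto (fun ε => (2 * u x - u (x - ε) - u (x + ε)) / ε ^ p) (𝓝[>] 0) (𝓝 0) := by
  have hux : ContinuousAt u x := hu.self_of_nhds.continuousAt
  have hminus : Tendsto (fun ε => x - ε) (𝓝[>] 0) (𝓝 x) :=
    ((by fun_prop : Continuous fun ε : ℝ => x - ε).tendsto' 0 x (sub_zero x)).mono_left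
      nhdsWithin_le_nhds
  have hplus : Tendsto (fun ε => x + ε) (𝓝[>] 0) (𝓝 x) :=
    ((by fun_prop : Continuous fun ε : ℝ => x + ε).tendsto' 0 x (add_zero x)).mono_left
      nhdsWithin_le_nhds
  have hK : Tendsto (fun ε : ℝ => ε * (p * ε ^ (p - 1))⁻¹) (𝓝[>] 0) (𝓝 0) := by
    have h := (tendsto_rpow_nhdsGT_zero (sub_pos.2 hp2)).const_mul p⁻¹
    rw [mul_zero] at h
    refine h.congr' ?_
    filter_upwards [self_mem_nhdsWithin] with ε (hε : 0 < ε)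
    rw [show 2 - p = 1 - (p - 1) by ring, Real.rpow_sub hε, Real.rpow_one]
    field_simp
  refine HasDerivAt.lhopital_zero_nhdsGT (f' := fun ε => deriv u (x - ε) - deriv u (x + ε))
    (g' := fun ε => p * ε ^ (p - 1)) ?_ ?_ ?_ ?_ (tendsto_rpow_nhdsGT_zero hp) ?_
  · filter_upwards [hminus.eventually hu, hplus.eventually hu] with ε hdm hdp
    simpa using ((hdm.hasDerivAt.comp_const_sub x ε).const_sub (2 * u x)).fun_sub
      (hdp.hasDerivAt.comp_const_add x ε)
  · filter_upwards [self_mem_nhdsWithin] with ε hε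
    exact Real.hasDerivAt_rpow_const (Or.inl (ne_of_gt hε))
  · filter_upwards [self_mem_nhdsWithin] with ε (hε : 0 < ε) using by positivity
  · convert! (tendsto_const_nhds (x := 2 * u x)).sub (hux.tendsto.comp hminus) |>.sub
      (hux.tendsto.comp hplus) using 2
    ring
  · simpa only [div_eq_inv_mul] using tendsto_mul_symmetric_difference hK hu'

end SymmetricDifferences

/-- An even kernel on the line, `C¹` off the origin, whose singularity at `0` is integrable and
weaker than `1 / |z|`. Both `|z| ^ p` with `-1 < p` and `log |z|` are of this kind. -/
structure IsEvenSingularKernel (K : ℝ → ℝ) : Prop where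
  even : Function.Even K
  contDiffOn : ContDiffOn ℝ 1 K {0}ᶜ
  locallyIntegrable : LocallyIntegrable K
  tendsto_mul_self : Tendsto (fun ε => ε * K ε) (𝓝[>] 0) (𝓝 0)

section Kernels

lemma hasDerivAt_abs_rpow_of_ne_zero {z : ℝ} (hz : z ≠ 0) (p : ℝ) :
    HasDerivAt (fun z : ℝ => |z| ^ p) (p * (z * |z| ^ (p - 2))) z := by
  have habs : |z| ≠ 0 := abs_ne_zero.2 hz
  convert! (hasDerivAt_abs hz).rpow_const (p := p) (Or.inl habs) using 1
  rw [show p - 1 = p - 2 + 1 by ring, Real.rpow_add_one habs]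
  linear_combination (-p * |z| ^ (p - 2)) * sign_mul_abs z

lemma hasDerivAt_self_mul_abs_rpow {z : ℝ} (hz : z ≠ 0) (q : ℝ) :
    HasDerivAt (fun z : ℝ => z * |z| ^ q) ((q + 1) * |z| ^ q) z := by
  have habs : |z| ≠ 0 := abs_ne_zero.2 hz
  convert! (hasDerivAt_id z).mul (hasDerivAt_abs_rpow_of_ne_zero hz q) using 1
  have hpow : |z| ^ q = z ^ 2 * |z| ^ (q - 2) := by
    rw [← sq_abs, mul_comm, ← Real.rpow_add_natCast habs]
    norm_num
  rw [id, hpow]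
  ring

lemma hasDerivAt_log_abs {z : ℝ} (hz : z ≠ 0) :
    HasDerivAt (fun z : ℝ => Real.log |z|) (z * |z| ^ (-2 : ℝ)) z := by
  simp only [Real.log_abs]
  convert! Real.hasDerivAt_log hz using 1
  rw [Real.rpow_neg (abs_nonneg z), Real.rpow_two, sq_abs]
  field_simp

lemma isEvenSingularKernel_abs_rpow {p : ℝ} (hp : -1 < p) :
    IsEvenSingularKernel fun z => |z| ^ p where
  even z := by simp only [abs_neg]
  contDiffOn z hz :=
    ((contDiffAt_abs hz).rpow_const_of_ne (abs_ne_zero.2 hz)).contDiffWithinAt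
  locallyIntegrable := by
    refine locallyIntegrable_of_norm_le_rpow (C := 1) (α := -p) (by simp) (by simp; linarith) ?_
      (by fun_prop : Measurable fun z : ℝ => |z| ^ p).aestronglyMeasurable
    refine Eventually.of_forall fun z => ?_
    simp [abs_of_nonneg (Real.rpow_nonneg (abs_nonneg z) p)]
  tendsto_mul_self := by
    refine (tendsto_rpow_nhdsGT_zero (neg_lt_iff_pos_add.1 hp)).congr' ?_
    filter_upwards [self_mem_nhdsWithin] with ε (hε : 0 < ε)
    rw [abs_of_pos hε, Real.rpow_add_one hε.ne', mul_comm]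

lemma isEvenSingularKernel_log_abs : IsEvenSingularKernel fun z => Real.log |z| where
  even z := by simp only [abs_neg]
  contDiffOn := by
    simp only [Real.log_abs]
    exact Real.contDiffOn_log
  locallyIntegrable := by
    simp only [Real.log_abs]
    refine locallyIntegrable_iff.2 fun S hS => ?_
    obtain ⟨R, hR, hSR⟩ := hS.isBounded.exists_pos_norm_le
    have hlog : IntegrableOn Real.log (Icc (-R) R) := by
      rw [← intervalIntegrable_iff_integrableOn_Icc_of_le (by linarith)]
      exact intervalIntegral.intervalIntegrable_log'
    exact hlog.mono_set fun z hz => abs_le.1 (hSR z hz)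
  tendsto_mul_self := by
    refine (tendsto_log_mul_rpow_nhdsGT_zero one_pos).congr fun ε => ?_
    rw [Real.log_abs, Real.rpow_one, mul_comm]

end Kernels

section Convolution

variable {K v : ℝ → ℝ} {x ε : ℝ}

lemma integrable_comp_sub_mul_of_notMem_tsupport (hK : ContinuousOn K {0}ᶜ) (hv : Integrable v)
    (hvc : HasCompactSupport v) (hx : x ∉ tsupport v) :
    Integrable fun y => K (x - y) * v y := by
  have hcont : ContinuousOn (fun y => K (x - y)) (univ ∩ tsupport v) :=
    hK.comp (by fun_prop) fun y hy => sub_ne_zero.2 fun h => hx (h ▸ hy.2)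
  exact integrableOn_univ.1
    (integrableOn_mul_of_continuousOn_inter_tsupport isClosed_univ hcont hv hvc)

lemma integrableOn_le_abs_mul_comp_sub (hK : ContinuousOn K {0}ᶜ) (hv : Integrable v)
    (hvc : HasCompactSupport v) (hε : 0 < ε) :
    IntegrableOn (fun z => K z * v (x - z)) {z | ε ≤ |z|} :=
  integrableOn_mul_of_continuousOn_inter_tsupport (isClosed_setOf_le_abs ε)
    (hK.mono fun _ hz => ne_zero_of_le_abs hε hz.1) (hv.comp_sub_left x)
    (hvc.comp_homeomorph (Homeomorph.subLeft x))

lemma hasDerivAt_integral_comp_sub_mul_of_notMem_tsupport (hK : ContDiffOn ℝ 1 K {0}ᶜ)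
    (hv : Integrable v) (hvc : HasCompactSupport v) (hx : x ∉ tsupport v) :
    HasDerivAt (fun t => ∫ y, K (t - y) * v y) (∫ y, deriv K (x - y) * v y) x := by
  obtain ⟨r, hr, hball⟩ := Metric.nhds_basis_closedBall.mem_iff.1
    ((isClosed_tsupport v).isOpen_compl.mem_nhds hx)
  have hK' : ContinuousOn (deriv K) {0}ᶜ :=
    hK.continuousOn_deriv_of_isOpen isOpen_compl_singleton le_rfl
  have hne : ∀ t ∈ Metric.closedBall x r, ∀ y ∈ tsupport v, t - y ∈ ({0}ᶜ : Set ℝ) :=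
    fun t ht y hy => sub_ne_zero.2 fun h => hball ht (h ▸ hy)
  obtain ⟨C, hC⟩ := ((isCompact_closedBall x r).prod hvc.isCompact).exists_bound_of_continuousOn
    (f := fun q : ℝ × ℝ => deriv K (q.1 - q.2))
    (hK'.comp (by fun_prop) fun q hq => hne q.1 hq.1 q.2 hq.2)
  refine (hasDerivAt_integral_of_dominated_loc_of_deriv_le (F := fun t y => K (t - y) * v y)
    (F' := fun t y => deriv K (t - y) * v y) (bound := fun y => C * ‖v y‖)
    (Metric.closedBall_mem_nhds x hr) ?_
    (integrable_comp_sub_mul_of_notMem_tsupport hK.continuousOn hv hvc hx)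
    (integrable_comp_sub_mul_of_notMem_tsupport hK' hv hvc hx).aestronglyMeasurable
    (Eventually.of_forall fun y t ht => ?_) (hv.norm.const_mul C)
    (Eventually.of_forall fun y t ht => ?_)).2
  · filter_upwards [Metric.closedBall_mem_nhds x hr] with t ht
    exact (integrable_comp_sub_mul_of_notMem_tsupport hK.continuousOn hv hvc
      (hball ht)).aestronglyMeasurable
  · by_cases hy : y ∈ tsupport v
    · rw [norm_mul]
      exact mul_le_mul_of_nonneg_right (hC (t, y) ⟨ht, hy⟩) (norm_nonneg _)
    · simp [image_eq_zero_of_notMem_tsupport hy]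
  · by_cases hy : y ∈ tsupport v
    · have hKt : HasDerivAt K (deriv K (t - y)) (t - y) :=
        ((hK.contDiffAt (isOpen_compl_singleton.mem_nhds (hne t ht y hy))).differentiableAt
          one_ne_zero).hasDerivAt
      exact (hKt.comp_sub_const t y).mul_const _
    · simpa [image_eq_zero_of_notMem_tsupport hy] using hasDerivAt_const t (0 : ℝ)

lemma tendsto_integral_le_abs_mul_comp_sub_of_notMem_tsupport (hx : x ∉ tsupport v) :
    Tendsto (fun ε => ∫ z in {z : ℝ | ε ≤ |z|}, K z * v (x - z)) (𝓝[>] 0)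
      (𝓝 (∫ y, K (x - y) * v y)) := by
  obtain ⟨r, hr, hball⟩ := Metric.eventually_nhds_iff.1 (notMem_tsupport_iff_eventuallyEq.1 hx)
  refine tendsto_const_nhds.congr' ?_
  filter_upwards [Ioo_mem_nhdsGT hr] with ε hε
  rw [← integral_sub_left_eq_self _ volume x,
    setIntegral_eq_integral_of_forall_compl_eq_zero fun z hz => ?_]
  · simp only [sub_sub_cancel]
  · have hvz : v (x - z) = 0 := hball (by simpa using (not_le.1 hz).trans hε.2)
    rw [hvz, mul_zero]

lemma integrable_mul_comp_sub_of_continuous (hK : LocallyIntegrable K) (hv : Continuous v)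
    (hvc : HasCompactSupport v) (t : ℝ) : Integrable fun z => K z * v (t - z) := by
  simpa [ConvolutionExistsAt] using
    hvc.convolutionExists_right (ContinuousLinearMap.mul ℝ ℝ) hK hv t

lemma hasDerivAt_integral_comp_sub_mul_of_contDiff (hK : LocallyIntegrable K)
    (hv : ContDiff ℝ 1 v) (hvc : HasCompactSupport v) :
    HasDerivAt (fun t => ∫ y, K (t - y) * v y) (∫ z, K z * deriv v (x - z)) x := by
  convert! hvc.hasDerivAt_convolution_right (ContinuousLinearMap.mul ℝ ℝ) hK hv x using 1
  ext t
  rw [convolution_def, ← integral_sub_left_eq_self _ volume t]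
  simp only [sub_sub_cancel, ContinuousLinearMap.mul_apply']

namespace IsEvenSingularKernel

lemma continuousOn_deriv (hK : IsEvenSingularKernel K) : ContinuousOn (deriv K) {0}ᶜ :=
  hK.contDiffOn.continuousOn_deriv_of_isOpen isOpen_compl_singleton le_rfl

lemma integral_le_abs_deriv_mul_comp_sub (hK : IsEvenSingularKernel K) (hv : ContDiff ℝ 1 v)
    (hvc : HasCompactSupport v) (hε : 0 < ε) :
    ∫ z in {z : ℝ | ε ≤ |z|}, deriv K z * v (x - z) =
      -(K ε * (v (x - ε) - v (x + ε))) +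
        ∫ z in {z : ℝ | ε ≤ |z|}, K z * deriv v (x - z) := by
  have hKderiv : ∀ z, ε ≤ |z| → HasDerivAt K (deriv K z) z := fun z hz =>
    ((hK.contDiffOn.contDiffAt (isOpen_compl_singleton.mem_nhds
      (ne_zero_of_le_abs hε hz))).differentiableAt one_ne_zero).hasDerivAt
  have hvderiv : ∀ z, HasDerivAt (fun z => v (x - z)) (-deriv v (x - z)) z := fun z =>
    ((hv.differentiable one_ne_zero _).hasDerivAt).comp_const_sub x z
  have hvxc : HasCompactSupport fun z => v (x - z) := hvc.comp_homeomorph (Homeomorph.subLeft x)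
  have hK'v := integrableOn_le_abs_mul_comp_sub (x := x) hK.continuousOn_deriv
    (hv.continuous.integrable_of_hasCompactSupport hvc) hvc hε
  have hKv' := (integrable_mul_comp_sub_of_continuous hK.locallyIntegrable
    (hv.continuous_deriv le_rfl) hvc.deriv x).integrableOn (s := {z | ε ≤ |z|})
  have hparts := integral_le_abs_mul_deriv_eq_deriv_mul hε.le countable_empty
    (hv.continuous.comp (by fun_prop : Continuous fun z => x - z)).continuousOn
    (fun z hz => (hKderiv z hz).continuousAt.continuousWithinAt) (fun z _ _ => hvderiv z)
    (fun z hz _ => hKderiv z hz) (by simpa only [mul_comm, Function.comp_apply] using hK'v)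
    (by simpa only [neg_mul, mul_comm (deriv v _)] using hKv'.fun_neg)
    hvxc.mul_right.is_zero_at_infty
  simp only [Function.comp_apply, neg_mul, integral_neg, sub_neg_eq_add, hK.even ε] at hparts
  simp only [mul_comm (deriv K _), mul_comm (K _) (deriv v _), hparts]
  ring

lemma tendsto_integral_le_abs_deriv_mul_comp_sub (hK : IsEvenSingularKernel K)
    (hv : ContDiff ℝ 1 v) (hvc : HasCompactSupport v) :
    Tendsto (fun ε => ∫ z in {z : ℝ | ε ≤ |z|}, deriv K z * v (x - z)) (𝓝[>] 0)
      (𝓝 (∫ z, K z * deriv v (x - z))) := by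
  have hboundary := tendsto_mul_symmetric_difference (x := x) hK.tendsto_mul_self
    (hv.differentiable one_ne_zero x)
  have hbulk := tendsto_integral_le_abs (integrable_mul_comp_sub_of_continuous
    hK.locallyIntegrable (hv.continuous_deriv le_rfl) hvc.deriv x)
  have hsum := hboundary.neg.add hbulk
  rw [neg_zero, zero_add] at hsum
  refine hsum.congr' ?_
  filter_upwards [self_mem_nhdsWithin] with ε hε
  exact (hK.integral_le_abs_deriv_mul_comp_sub hv hvc hε).symm

theorem exists_hasDerivAt_integral_and_tendsto (hK : IsEvenSingularKernel K) (hv : Integrable v)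
    (hvc : HasCompactSupport v) (hvx : ContDiffAt ℝ 1 v x) :
    ∃ F', HasDerivAt (fun t => ∫ y, K (t - y) * v y) F' x ∧
      Tendsto (fun ε => ∫ z in {z : ℝ | ε ≤ |z|}, deriv K z * v (x - z)) (𝓝[>] 0) (𝓝 F') := by
  obtain ⟨w, hw, hwc, hwv⟩ := exists_contDiff_hasCompactSupport_eventuallyEq (n := 1) hvx
  have hwi : Integrable w := hw.continuous.integrable_of_hasCompactSupport hwc
  have hri : Integrable (v - w) := hv.sub hwi
  have hrc : HasCompactSupport (v - w) := hvc.sub hwc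
  have hxr : x ∉ tsupport (v - w) := notMem_tsupport_iff_eventuallyEq.2 <| by
    filter_upwards [hwv] with y hy using sub_eq_zero.2 hy.symm
  refine ⟨_, ((hasDerivAt_integral_comp_sub_mul_of_contDiff hK.locallyIntegrable hw hwc).add
    (hasDerivAt_integral_comp_sub_mul_of_notMem_tsupport hK.contDiffOn hri hrc
      hxr)).congr_of_eventuallyEq ?_, ((hK.tendsto_integral_le_abs_deriv_mul_comp_sub hw hwc).add
    (tendsto_integral_le_abs_mul_comp_sub_of_notMem_tsupport hxr)).congr' ?_⟩
  · filter_upwards [(isClosed_tsupport (v - w)).isOpen_compl.mem_nhds hxr] with t ht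
    have hKw : Integrable fun y => K (t - y) * w y := by
      simpa using (integrable_mul_comp_sub_of_continuous hK.locallyIntegrable hw.continuous hwc
        t).comp_sub_left t
    rw [Pi.add_apply, ← integral_add hKw
      (integrable_comp_sub_mul_of_notMem_tsupport hK.contDiffOn.continuousOn hri hrc ht)]
    simp only [← mul_add, Pi.sub_apply, add_sub_cancel]
  · filter_upwards [self_mem_nhdsWithin] with ε hε
    rw [← integral_add (integrableOn_le_abs_mul_comp_sub hK.continuousOn_deriv hwi hwc hε)
      (integrableOn_le_abs_mul_comp_sub hK.continuousOn_deriv hri hrc hε)]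
    simp only [← mul_add, Pi.sub_apply, add_sub_cancel]

end IsEvenSingularKernel

end Convolution

section FractionalLaplacian

variable {s x ε : ℝ} {u : ℝ → ℝ} {N : Set ℝ}

lemma tendsto_self_mul_abs_rpow_cocompact {q : ℝ} (hq : q < -1) :
    Tendsto (fun y : ℝ => y * |y| ^ q) (cocompact ℝ) (𝓝 0) := by
  have hpow : Tendsto (fun y : ℝ => |y| ^ (-(-(q + 1)))) (cocompact ℝ) (𝓝 0) :=
    (tendsto_rpow_neg_atTop (by linarith)).comp (tendsto_norm_cocompact_atTop (E := ℝ))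
  refine squeeze_zero_norm' ?_ hpow
  filter_upwards [(isCompact_singleton (x := (0 : ℝ))).compl_mem_cocompact] with y hy
  rw [norm_mul, Real.norm_eq_abs, Real.norm_of_nonneg (by positivity), neg_neg,
    Real.rpow_add_one (abs_ne_zero.2 hy), mul_comm]

lemma integral_le_abs_sub_mul_abs_rpow (hs : 0 < s) (hε : 0 < ε) (hu : Continuous u)
    (huc : HasCompactSupport u) (hN : N.Countable) (hud : ∀ y ∉ N, DifferentiableAt ℝ u y)
    (hu' : Integrable (deriv u)) :
    ∫ y in {y : ℝ | ε ≤ |y|}, (u x - u (x - y)) * |y| ^ (-1 - 2 * s) =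
      (2 * s)⁻¹ * ((2 * u x - u (x - ε) - u (x + ε)) / ε ^ (2 * s) +
        ∫ y in {y : ℝ | ε ≤ |y|}, y * |y| ^ (-1 - 2 * s) * deriv u (x - y)) := by
  obtain ⟨C, hC⟩ := hu.bounded_above_of_compact_support huc
  have hbound : ∀ y, ‖u x - u (x - y)‖ ≤ C + C := fun y =>
    (norm_sub_le _ _).trans (add_le_add (hC _) (hC _))
  have hcont : Continuous fun y => u x - u (x - y) := by fun_prop
  have hgderiv : ∀ y, ε ≤ |y| → HasDerivAt (fun y : ℝ => y * |y| ^ (-1 - 2 * s))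
      ((-1 - 2 * s + 1) * |y| ^ (-1 - 2 * s)) y := fun y hy =>
    hasDerivAt_self_mul_abs_rpow (ne_zero_of_le_abs hε hy) _
  have hpow : IntegrableOn (fun y => (-1 - 2 * s + 1) * |y| ^ (-1 - 2 * s)) {y : ℝ | ε ≤ |y|} :=
    (integrableOn_le_abs_rpow hε (by linarith)).const_mul _
  have hgu' : IntegrableOn (fun y => y * |y| ^ (-1 - 2 * s) * deriv u (x - y)) {y | ε ≤ |y|} :=
    integrableOn_le_abs_mul_comp_sub (fun y hy =>
      (hasDerivAt_self_mul_abs_rpow hy _).continuousAt.continuousWithinAt) hu' huc.deriv hε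
  have hparts := integral_le_abs_mul_deriv_eq_deriv_mul (f := fun y => u x - u (x - y))
    (f' := fun y => deriv u (x - y)) hε.le (hN.preimage (sub_right_injective (b := x)))
    hcont.continuousOn (fun y hy => (hgderiv y hy).continuousAt.continuousWithinAt)
    (fun y _ hy => by simpa using ((hud _ hy).hasDerivAt.comp_const_sub x y).const_sub (u x))
    (fun y hy _ => hgderiv y hy)
    (hpow.bdd_mul hcont.aestronglyMeasurable (Eventually.of_forall hbound))
    (by simpa only [mul_comm (deriv u _)] using hgu')
    (bdd_le_mul_tendsto_zero' (C + C) (Eventually.of_forall hbound)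
      (tendsto_self_mul_abs_rpow_cocompact (by linarith)))
  have hεpow : ε * ε ^ (-1 - 2 * s) = (ε ^ (2 * s))⁻¹ := by
    rw [mul_comm, ← Real.rpow_add_one hε.ne', ← Real.rpow_neg hε.le]
    ring_nf
  simp only [mul_left_comm _ (-1 - 2 * s + 1), integral_const_mul, abs_neg, abs_of_pos hε,
    neg_mul, hεpow, sub_neg_eq_add, mul_comm (deriv u _)] at hparts
  rw [eq_inv_mul_iff_mul_eq₀ (by positivity)]
  linear_combination -hparts

lemma hasFracLap_of_tendsto_integral_le_abs {L : ℝ} (hs : s ∈ Ioo (0 : ℝ) 1) (hu : Continuous u)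
    (huc : HasCompactSupport u) (hN : N.Countable) (hud : ∀ y ∉ N, DifferentiableAt ℝ u y)
    (hu' : Integrable (deriv u)) (hux : ∀ᶠ y in 𝓝 x, DifferentiableAt ℝ u y)
    (hu'x : DifferentiableAt ℝ (deriv u) x)
    (hL : Tendsto (fun ε => ∫ z in {z : ℝ | ε ≤ |z|}, z * |z| ^ (-1 - 2 * s) * deriv u (x - z))
      (𝓝[>] 0) (𝓝 L)) :
    HasFracLap s u x (C1 s / (2 * s) * L) := by
  have hboundary := tendsto_second_difference_div_rpow (p := 2 * s) (by linarith [hs.1])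
    (by linarith [hs.2]) hux hu'x
  have hlim := ((hboundary.add hL).const_mul (2 * s)⁻¹).const_mul (C1 s)
  rw [zero_add, ← mul_assoc, ← div_eq_mul_inv] at hlim
  refine hlim.congr' ?_
  filter_upwards [self_mem_nhdsWithin] with ε hε
  rw [integral_le_abs_sub_mul_abs_rpow hs.1 hε hu huc hN hud hu']

theorem IsEvenSingularKernel.exists_hasDerivAt_integral_and_hasFracLap {K : ℝ → ℝ} {c : ℝ}
    (hK : IsEvenSingularKernel K) (hc : c ≠ 0)
    (hKderiv : ∀ z ≠ 0, HasDerivAt K (c * (z * |z| ^ (-1 - 2 * s))) z) (hs : s ∈ Ioo (0 : ℝ) 1)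
    (hu : Continuous u) (huc : HasCompactSupport u) (hN : N.Countable)
    (hud : ∀ y ∉ N, DifferentiableAt ℝ u y) (hu' : Integrable (deriv u))
    (hux : ContDiffAt ℝ 2 u x) :
    ∃ F', HasDerivAt (fun t => ∫ y, K (t - y) * deriv u y) F' x ∧
      HasFracLap s u x (C1 s / (2 * s * c) * F') := by
  have hu'x : ContDiffAt ℝ 1 (deriv u) x := hux.derivWithin (by norm_num)
  obtain ⟨F', hF', hlim⟩ := hK.exists_hasDerivAt_integral_and_tendsto hu' huc.deriv hu'x
  refine ⟨F', hF', ?_⟩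
  have hL : Tendsto (fun ε => ∫ z in {z : ℝ | ε ≤ |z|}, z * |z| ^ (-1 - 2 * s) * deriv u (x - z))
      (𝓝[>] 0) (𝓝 (c⁻¹ * F')) := by
    refine (hlim.const_mul c⁻¹).congr' ?_
    filter_upwards [self_mem_nhdsWithin] with ε hε
    rw [← integral_const_mul]
    refine setIntegral_congr_fun (isClosed_setOf_le_abs ε).measurableSet fun z hz => ?_
    simp only [(hKderiv z (ne_zero_of_le_abs hε hz)).deriv, mul_assoc, inv_mul_cancel_left₀ hc]
  have hdiff : ∀ᶠ y in 𝓝 x, DifferentiableAt ℝ u y :=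
    (hux.eventually (by simp)).mono fun y hy => hy.differentiableAt two_ne_zero
  convert! hasFracLap_of_tendsto_integral_le_abs hs hu huc hN hud hu' hdiff
    (hu'x.differentiableAt one_ne_zero) hL using 1
  field_simp

lemma C1_one_half : C1 (1 / 2) = 1 / Real.pi := by
  rw [C1, show (1 : ℝ) - 1 / 2 = 1 / 2 by norm_num, Real.Gamma_one_half_eq,
    Real.mul_self_sqrt Real.pi_pos.le]
  norm_num [Real.Gamma_one]

end FractionalLaplacian

lemma ae_notMem_deriv_eq_zero_of_forall_notMem_eq_zero {u : ℝ → ℝ} {Ω : Set ℝ}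
    (hΩ : (frontier Ω).Countable) (hzero : ∀ y ∉ Ω, u y = 0) :
    ∀ᵐ y, y ∉ Ω → deriv u y = 0 := by
  filter_upwards [hΩ.ae_notMem volume] with y hfr hy
  have hyc : y ∈ interior Ωᶜ := by
    rw [interior_compl]
    exact fun hcl => hfr ⟨hcl, fun hyi => hy (interior_subset hyi)⟩
  have huz : u =ᶠ[𝓝 y] fun _ => 0 := by
    filter_upwards [mem_interior_iff_mem_nhds.1 hyc] with z hz using hzero z hz
  rw [huz.deriv_eq, deriv_const]

theorem stmt0_general {s x : ℝ} {u : ℝ → ℝ} {Ω : Set ℝ} (hs : s ∈ Ioo (0 : ℝ) 1)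
    (hΩ : (frontier Ω).Countable) (hu : Continuous u) (huc : HasCompactSupport u)
    (hud : ∀ y ∉ frontier Ω, DifferentiableAt ℝ u y) (hzero : ∀ y ∉ Ω, u y = 0)
    (hu' : IntegrableOn (deriv u) Ω) (hux : ContDiffAt ℝ 2 u x) :
    (s ≠ 1 / 2 → ∃ F' : ℝ,
      HasDerivAt (fun t : ℝ => ∫ y in Ω, |t - y| ^ (1 - 2 * s) * deriv u y) F' x ∧
        HasFracLap s u x (Cs s * F')) ∧
    (s = 1 / 2 → ∃ G' : ℝ,
      HasDerivAt (fun t : ℝ => ∫ y in Ω, Real.log |t - y| * deriv u y) G' x ∧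
        HasFracLap s u x ((1 / Real.pi) * G')) := by
  have hderiv := ae_notMem_deriv_eq_zero_of_forall_notMem_eq_zero hΩ hzero
  have huint : Integrable (deriv u) := hu'.integrable_of_ae_notMem_eq_zero hderiv
  have hset : ∀ K : ℝ → ℝ, ∀ t, ∫ y in Ω, K (t - y) * deriv u y = ∫ y, K (t - y) * deriv u y :=
    fun K t => setIntegral_eq_integral_of_ae_compl_eq_zero <| by
      filter_upwards [hderiv] with y hy hyΩ using by rw [hy hyΩ, mul_zero]
  refine ⟨fun hs2 => ?_, ?_⟩
  · have hc : 1 - 2 * s ≠ 0 := fun h => hs2 (by linarith)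
    simp only [hset fun z => |z| ^ (1 - 2 * s)]
    refine (isEvenSingularKernel_abs_rpow
      (by linarith [hs.2])).exists_hasDerivAt_integral_and_hasFracLap hc (fun z hz => ?_) hs
        hu huc hΩ hud huint hux
    convert! hasDerivAt_abs_rpow_of_ne_zero hz (1 - 2 * s) using 4
    ring
  · rintro rfl
    simp only [hset fun z => Real.log |z|]
    have hconst : C1 (1 / 2) / (2 * (1 / 2) * 1) = 1 / Real.pi := by norm_num [C1_one_half]
    rw [← hconst]
    refine isEvenSingularKernel_log_abs.exists_hasDerivAt_integral_and_hasFracLap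
      one_ne_zero (fun z hz => ?_) hs hu huc hΩ hud huint hux
    convert! hasDerivAt_log_abs hz using 1
    norm_num

theorem stmt0 (s a b : ℝ) (hs : s ∈ Set.Ioo (0 : ℝ) 1) (hab : a < b)
    (u : ℝ → ℝ) (hu_cont : Continuous u)
    (hu_C2 : ContDiffOn ℝ 2 u (Set.Ioo a b))
    (hu_zero : ∀ y, y ∉ Set.Ioo a b → u y = 0)
    (hu_int : MeasureTheory.IntegrableOn (deriv u) (Set.Ioo a b))
    (x : ℝ) (hxa : x ≠ a) (hxb : x ≠ b) :
    (s ≠ 1 / 2 →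
      ∃ F' : ℝ,
        HasDerivAt (fun t : ℝ => ∫ y in Set.Ioo a b, |t - y| ^ (1 - 2 * s) * deriv u y) F' x ∧
        HasFracLap s u x (Cs s * F')) ∧
    (s = 1 / 2 →
      ∃ G' : ℝ,
        HasDerivAt (fun t : ℝ => ∫ y in Set.Ioo a b, Real.log |t - y| * deriv u y) G' x ∧
        HasFracLap s u x ((1 / Real.pi) * G')) :=
  have hfrontier : frontier (Ioo a b) = {a, b} := frontier_Ioo hab
  have hC2 : ∀ y ∉ frontier (Ioo a b), ContDiffAt ℝ 2 u y := fun _ =>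
    contDiffAt_of_notMem_frontier hu_C2 hu_zero
  stmt0_general hs (hfrontier ▸ (Set.toFinite _).countable) hu_cont
    (.intro isCompact_Icc fun y hy => hu_zero y fun h => hy (Ioo_subset_Icc_self h))
    (fun y hy => (hC2 y hy).differentiableAt two_ne_zero) hu_zero hu_int
    (hC2 x (by simp [hfrontier, hxa, hxb]))
end

section
/- Let E = (a,b) ⊂ ℝ be a bounded open interval and let C ⊆ ℂ be open. Let f : E × C → ℂ satisfy: (1) f is continuous on E × C; (2) for each fixed t ∈ E, c ↦ f(t,c) is analytic on C; (3) for each c ∈ C, t ↦ f(t,c) is Lebesgue-integrable on E; and (4) for every compact K ⊂ C, the quantities h_a(η,c) = |∫_a^{a+η} f(t,c) dt| and h_b(η,c) = |∫_{b−η}^b f(t,c) dt| tend to 0 as η → 0⁺, uniformly for c ∈ K. Then the function F(c) = ∫_E f(t,c) dt is analytic on C. -/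
open MeasureTheory Filter Set
open scoped Topology

/-!
By Cauchy's estimates, locally uniform convergence of holomorphic functions passes to derivatives,
so the `c`-derivative of `f` inherits joint continuity from `f`. It is therefore bounded on compact
sets, and one may differentiate under the integral over any compact part of the interval. The
endpoint hypotheses imply that the integrals over `[a + η, b - η]` converge locally uniformly
in `c` to the full integral, and locally uniform limits of holomorphic functions are holomorphic.
-/

section UniformConvergence

theorem tendstoLocallyUniformlyOn_of_continuousOn_uncurry {X Y Z : Type*} [TopologicalSpace X]
    [TopologicalSpace Y] [LocallyCompactSpace Y] [UniformSpace Z] {S : Set X} {U : Set Y}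
    (hU : IsOpen U) {f : X → Y → Z} (hf : ContinuousOn f.uncurry (S ×ˢ U)) {x : X} (hx : x ∈ S) :
    TendstoLocallyUniformlyOn f (f x) (𝓝[S] x) U := by
  rw [tendstoLocallyUniformlyOn_iff_forall_isCompact hU]
  intro K hKU hK u hu
  obtain ⟨v, hv, hclose⟩ :=
    hK.mem_uniformity_of_prod (hf.mono (prod_mono_right hKU)) hx (symm_le_uniformity hu)
  filter_upwards [hv] using hclose

theorem tendstoLocallyUniformlyOn_zero_nhdsGT_iff {Y E : Type*} [TopologicalSpace Y]
    [LocallyCompactSpace Y] [SeminormedAddCommGroup E] {U : Set Y} (hU : IsOpen U)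
    {g : ℝ → Y → E} :
    TendstoLocallyUniformlyOn g 0 (𝓝[>] 0) U ↔
      ∀ K ⊆ U, IsCompact K → ∀ δ > 0, ∃ η₀ > 0, ∀ η, 0 < η → η < η₀ → ∀ y ∈ K, ‖g η y‖ < δ := by
  simp only [tendstoLocallyUniformlyOn_iff_forall_isCompact hU, Metric.tendstoUniformlyOn_iff,
    Pi.zero_apply, dist_zero_left, (nhdsGT_basis (0 : ℝ)).eventually_iff, mem_Ioo, and_imp,
    gt_iff_lt]

end UniformConvergence

section Holomorphic

variable {X E : Type*} [TopologicalSpace X] [NormedAddCommGroup E] [NormedSpace ℂ E]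
  [CompleteSpace E] {S : Set X} {U : Set ℂ} {f : X → ℂ → E}

theorem continuousOn_deriv_of_continuousOn_uncurry (hU : IsOpen U)
    (hf : ContinuousOn f.uncurry (S ×ˢ U)) (hd : ∀ x ∈ S, DifferentiableOn ℂ (f x) U) :
    ContinuousOn (fun p : X × ℂ => deriv (f p.1) p.2) (S ×ˢ U) := by
  rintro ⟨x, c⟩ ⟨hx, hc⟩
  have hderiv : TendstoLocallyUniformlyOn (deriv ∘ f) (deriv (f x)) (𝓝[S] x) U :=
    (tendstoLocallyUniformlyOn_of_continuousOn_uncurry hU hf hx).deriv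
      (eventually_nhdsWithin_of_forall hd) hU
  have hcont : ContinuousWithinAt (deriv (f x)) U c := ((hd x hx).deriv hU).continuousOn c hc
  rw [ContinuousWithinAt, nhdsWithin_prod_eq]
  exact TendstoLocallyUniformlyOn.tendsto_comp
    (fun u hu y hy => (hderiv u hu y hy).imp fun t ht => ⟨ht.1, tendsto_fst.eventually ht.2⟩)
    hcont hc tendsto_snd

variable [MeasurableSpace X] [OpensMeasurableSpace X] {μ : Measure X} [IsFiniteMeasureOnCompacts μ]

theorem differentiableOn_setIntegral_of_isCompact (hS : IsCompact S) (hSm : MeasurableSet S)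
    (hU : IsOpen U) (hf : ContinuousOn f.uncurry (S ×ˢ U))
    (hd : ∀ x ∈ S, DifferentiableOn ℂ (f x) U) :
    DifferentiableOn ℂ (fun c => ∫ x in S, f x c ∂μ) U := by
  intro c₀ hc₀
  have hUc₀ : U ∈ 𝓝 c₀ := hU.mem_nhds hc₀
  obtain ⟨r, hr, hball⟩ := Metric.nhds_basis_closedBall.mem_iff.1 hUc₀
  have hf' := continuousOn_deriv_of_continuousOn_uncurry hU hf hd
  obtain ⟨M, hM⟩ := (hS.prod (isCompact_closedBall c₀ r)).exists_bound_of_continuousOn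
    (hf'.mono (prod_mono_right hball))
  have hslice : ∀ c ∈ U, ContinuousOn (fun x => f x c) S := fun c hc =>
    hf.comp (f := fun x => (x, c)) (by fun_prop) fun x hx => ⟨hx, hc⟩
  have hslice' : ContinuousOn (fun x => deriv (f x) c₀) S :=
    hf'.comp (f := fun x => (x, c₀)) (by fun_prop) fun x hx => ⟨hx, hc₀⟩
  have hderiv := hasDerivAt_integral_of_dominated_loc_of_deriv_le (μ := μ.restrict S)
    (F := fun c x => f x c) (F' := fun c x => deriv (f x) c) (bound := fun _ => M)
    (Metric.closedBall_mem_nhds c₀ hr)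
    (hF_meas := eventually_of_mem hUc₀ fun c hc =>
      (hslice c hc).aestronglyMeasurable_of_isCompact hS hSm)
    (hF_int := (hslice c₀ hc₀).integrableOn_compact' hS hSm)
    (hF'_meas := hslice'.aestronglyMeasurable_of_isCompact hS hSm)
    (h_bound := ae_restrict_of_forall_mem hSm fun x hx c hc => hM (x, c) ⟨hx, hc⟩)
    (bound_integrable := integrableOn_const hS.measure_ne_top)
    (h_diff := ae_restrict_of_forall_mem hSm fun x hx c hc =>
      ((hd x hx).differentiableAt (hU.mem_nhds (hball hc))).hasDerivAt)
  exact hderiv.2.differentiableAt.differentiableWithinAt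

theorem differentiableOn_setIntegral_of_tendstoLocallyUniformlyOn_sdiff {ι : Type*}
    {l : Filter ι} [l.NeBot] {K : ι → Set X}
    (hK : ∀ᶠ i in l, IsCompact (K i) ∧ MeasurableSet (K i) ∧ K i ⊆ S)
    (hU : IsOpen U) (hf : ContinuousOn f.uncurry (S ×ˢ U))
    (hd : ∀ x ∈ S, DifferentiableOn ℂ (f x) U)
    (hint : ∀ c ∈ U, IntegrableOn (fun x => f x c) S μ)
    (htail : TendstoLocallyUniformlyOn (fun i c => ∫ x in S \ K i, f x c ∂μ) 0 l U) :
    DifferentiableOn ℂ (fun c => ∫ x in S, f x c ∂μ) U := by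
  have hlim : TendstoLocallyUniformlyOn (fun i c => ∫ x in K i, f x c ∂μ)
      (fun c => ∫ x in S, f x c ∂μ) l U := by
    rw [tendstoLocallyUniformlyOn_iff_forall_isCompact hU] at htail ⊢
    intro L hLU hL
    have htailL := htail L hLU hL
    rw [Metric.tendstoUniformlyOn_iff] at htailL ⊢
    intro ε hε
    filter_upwards [htailL ε hε, hK] with i hi ⟨_, hKm, hKS⟩ c hc
    rw [dist_eq_norm, ← setIntegral_sdiff hKm (hint c (hLU hc)) hKS]
    simpa only [Pi.zero_apply, dist_zero_left] using hi c hc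
  refine hlim.differentiableOn ?_ hU
  filter_upwards [hK] with i ⟨hKc, hKm, hKS⟩
  exact differentiableOn_setIntegral_of_isCompact hKc hKm hU (hf.mono (prod_mono_left hKS))
    fun x hx => hd x (hKS hx)

end Holomorphic

section Interval

variable {α E : Type*} [LinearOrder α] [NormedAddCommGroup E]

theorem Ioo_sdiff_Icc_eq_union {a b p q : α} (haq : a ≤ q) (hpq : p ≤ q) (hpb : p ≤ b) :
    Ioo a b \ Icc p q = Ioo a p ∪ Ioo q b := by
  ext t
  simp only [Set.mem_sdiff, mem_union, mem_Ioo, mem_Icc]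
  grind

theorem setIntegral_Ioo_sdiff_Icc [NormedSpace ℝ E] [TopologicalSpace α] [OrderClosedTopology α]
    [MeasurableSpace α] [OpensMeasurableSpace α] {μ : Measure α} {a b p q : α} {g : α → E}
    (hg : IntegrableOn g (Ioo a b) μ) (haq : a ≤ q) (hpq : p ≤ q) (hpb : p ≤ b) :
    ∫ t in Ioo a b \ Icc p q, g t ∂μ = (∫ t in Ioo a p, g t ∂μ) + ∫ t in Ioo q b, g t ∂μ := by
  have hdisj : Disjoint (Ioo a p) (Ioo q b) :=
    disjoint_left.2 fun t htp htq => (htp.2.trans_le hpq).not_gt htq.1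
  rw [Ioo_sdiff_Icc_eq_union haq hpq hpb, setIntegral_union hdisj measurableSet_Ioo
    (hg.mono_set (Ioo_subset_Ioo_right hpb))
    (hg.mono_set (Ioo_subset_Ioo_left haq))]

variable [NormedSpace ℂ E] [CompleteSpace E]

theorem stmt3_general {μ : Measure ℝ} [IsLocallyFiniteMeasure μ] {a b : ℝ} (hab : a < b)
    {C : Set ℂ} (hC : IsOpen C) {f : ℝ → ℂ → E} (hcont : ContinuousOn f.uncurry (Ioo a b ×ˢ C))
    (hanal : ∀ t ∈ Ioo a b, DifferentiableOn ℂ (f t) C)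
    (hint : ∀ c ∈ C, IntegrableOn (fun t => f t c) (Ioo a b) μ)
    (hunif_a : TendstoLocallyUniformlyOn (fun η c => ∫ t in Ioo a (a + η), f t c ∂μ) 0 (𝓝[>] 0) C)
    (hunif_b : TendstoLocallyUniformlyOn (fun η c => ∫ t in Ioo (b - η) b, f t c ∂μ) 0 (𝓝[>] 0) C) :
    DifferentiableOn ℂ (fun c => ∫ t in Ioo a b, f t c ∂μ) C := by
  have hsmall : ∀ᶠ η : ℝ in 𝓝[>] 0, 0 < η ∧ η < (b - a) / 2 :=
    Ioo_mem_nhdsGT (half_pos (sub_pos.2 hab))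
  refine differentiableOn_setIntegral_of_tendstoLocallyUniformlyOn_sdiff
    (K := fun η => Icc (a + η) (b - η)) (l := 𝓝[>] 0) ?_ hC hcont hanal hint ?_
  · filter_upwards [hsmall] with η ⟨hη, _⟩
    exact ⟨isCompact_Icc, measurableSet_Icc, Icc_subset_Ioo (by linarith) (by linarith)⟩
  · have hsum := hunif_a.add hunif_b
    rw [add_zero] at hsum
    refine hsum.congr_inseparable ?_
    filter_upwards [hsmall] with η ⟨hη, hη'⟩ c hc
    exact .of_eq (setIntegral_Ioo_sdiff_Icc (hint c hc)
      (by linarith) (by linarith) (by linarith)).symm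

end Interval

theorem stmt3 (a b : ℝ) (hab : a < b) (C : Set ℂ) (hC : IsOpen C)
    (f : ℝ → ℂ → ℂ)
    (hcont : ContinuousOn (fun p : ℝ × ℂ => f p.1 p.2) (Set.Ioo a b ×ˢ C))
    (hanal : ∀ t ∈ Set.Ioo a b, DifferentiableOn ℂ (f t) C)
    (hint : ∀ c ∈ C, MeasureTheory.IntegrableOn (fun t => f t c) (Set.Ioo a b))
    (hunif_a : ∀ K ⊆ C, IsCompact K → ∀ δ > (0 : ℝ), ∃ η₀ > (0 : ℝ),
      ∀ η : ℝ, 0 < η → η < η₀ → ∀ c ∈ K, ‖∫ t in Set.Ioo a (a + η), f t c‖ < δ)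
    (hunif_b : ∀ K ⊆ C, IsCompact K → ∀ δ > (0 : ℝ), ∃ η₀ > (0 : ℝ),
      ∀ η : ℝ, 0 < η → η < η₀ → ∀ c ∈ K, ‖∫ t in Set.Ioo (b - η) b, f t c‖ < δ) :
    DifferentiableOn ℂ (fun c => ∫ t in Set.Ioo a b, f t c) C :=
  stmt3_general hab hC hcont hanal hint
    ((tendstoLocallyUniformlyOn_zero_nhdsGT_iff hC).2 hunif_a)
    ((tendstoLocallyUniformlyOn_zero_nhdsGT_iff hC).2 hunif_b)
end

section
/- Let 0 < s < 1/2, 0 < α < 2s, and x ∈ (0,1). Then N_α^s(x) = x^{α−2s} [ Γ(α)Γ(1−2s)/Γ(1+α−2s) − Γ(1−2s)Γ(2s−α)/Γ(1−α) ] + Σ_{k=0}^∞ ((2s)_k / (2s−α+k)) x^k / k!, where the series on the right converges. -/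
open MeasureTheory Filter Set

/-- `Npv s α x L` means the principal value
`P.V. ∫_0^1 sgn(x−y)|x−y|^{−2s} y^{α−1} dy` exists and equals `L`. -/
def Npv (s α x L : ℝ) : Prop :=
  Filter.Tendsto
    (fun ε : ℝ => ∫ y in Set.Ioo (0 : ℝ) 1 \ Set.Ioo (x - ε) (x + ε),
      Real.sign (x - y) * |x - y| ^ (-(2 * s)) * y ^ (α - 1))
    (nhdsWithin 0 (Set.Ioi 0)) (nhds L)

/-!
Since `2 s < 1` the singularity at `y = x` is integrable, so the principal value is an ordinary
integral and splits at `x`. On `(0, x)` the substitution `y = x t` produces `B(α, 1 - 2 s)`. On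
`(x, 1)` the substitution `y = x / t` maps the interval to itself and produces the tail over
`(x, 1)` of the integral for `B(2 s - α, 1 - 2 s)`. The complementary incomplete Beta integral over
`(0, x)` is expanded by integrating the binomial series of `(1 - t) ^ (-2 s)` term by term.
-/

open scoped Topology Nat

section PrincipalValue

theorem tendsto_setIntegral_diff_ball {X E : Type*} [MetricSpace X] [MeasurableSpace X]
    [OpensMeasurableSpace X] [NormedAddCommGroup E] [NormedSpace ℝ E] {μ : Measure X}
    [NullSingletonClass μ] {f : X → E} {A : Set X} (hf : IntegrableOn f A μ) (x : X) :
    Tendsto (fun ε : ℝ => ∫ y in A \ Metric.ball x ε, f y ∂μ) (𝓝[>] 0)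
      (𝓝 (∫ y in A, f y ∂μ)) := by
  have integral_eq_indicator (ε : ℝ) :
      ∫ y in A \ Metric.ball x ε, f y ∂μ = ∫ y in A, (Metric.ball x ε)ᶜ.indicator f y ∂μ :=
    (setIntegral_indicator Metric.isOpen_ball.measurableSet.compl).symm
  simp only [integral_eq_indicator]
  refine tendsto_integral_filter_of_dominated_convergence (fun y => ‖f y‖)
    (.of_forall fun ε => hf.1.indicator Metric.isOpen_ball.measurableSet.compl)
    (.of_forall fun ε => .of_forall fun y => norm_indicator_le_norm_self _ _) hf.norm ?_
  filter_upwards [Measure.ae_ne (μ.restrict A) x] with y hyx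
  refine tendsto_const_nhds.congr' ?_
  filter_upwards [mem_nhdsWithin_of_mem_nhds (Iio_mem_nhds (dist_pos.2 hyx))] with ε hε
  rw [indicator_of_mem (by simpa using (mem_Iio.1 hε).le)]

variable {a b x : ℝ}

theorem eqOn_sign_mul_abs_rpow_mul_left (p : ℝ) (g : ℝ → ℝ) (hax : a ≤ x) :
    EqOn (fun y => (x - y) ^ p * g y) (fun y => Real.sign (x - y) * |x - y| ^ p * g y)
      (uIoo a x) := by
  intro y hy
  rw [uIoo_of_le hax] at hy
  have hxy : 0 < x - y := sub_pos.2 hy.2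
  simp only [Real.sign_of_pos hxy, abs_of_pos hxy, one_mul]

theorem eqOn_sign_mul_abs_rpow_mul_right (p : ℝ) (g : ℝ → ℝ) (hxb : x ≤ b) :
    EqOn (fun y => -((y - x) ^ p * g y)) (fun y => Real.sign (x - y) * |x - y| ^ p * g y)
      (uIoo x b) := by
  intro y hy
  rw [uIoo_of_le hxb] at hy
  have hxy : x - y < 0 := sub_neg.2 hy.1
  simp only [Real.sign_of_neg hxy, abs_of_neg hxy, neg_sub, neg_mul, one_mul]

variable {p : ℝ} {g : ℝ → ℝ}

theorem intervalIntegrable_sign_mul_abs_rpow_mul (hax : a ≤ x) (hxb : x ≤ b)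
    (hleft : IntervalIntegrable (fun y => (x - y) ^ p * g y) volume a x)
    (hright : IntervalIntegrable (fun y => (y - x) ^ p * g y) volume x b) :
    IntervalIntegrable (fun y => Real.sign (x - y) * |x - y| ^ p * g y) volume a b :=
  (hleft.congr_uIoo (eqOn_sign_mul_abs_rpow_mul_left p g hax)).trans
    (hright.neg.congr_uIoo (eqOn_sign_mul_abs_rpow_mul_right p g hxb))

theorem integral_sign_mul_abs_rpow_mul (hax : a ≤ x) (hxb : x ≤ b)
    (hleft : IntervalIntegrable (fun y => (x - y) ^ p * g y) volume a x)
    (hright : IntervalIntegrable (fun y => (y - x) ^ p * g y) volume x b) :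
    ∫ y in a..b, Real.sign (x - y) * |x - y| ^ p * g y =
      (∫ y in a..x, (x - y) ^ p * g y) - ∫ y in x..b, (y - x) ^ p * g y := by
  have eqOn_left := eqOn_sign_mul_abs_rpow_mul_left p g hax
  have eqOn_right := eqOn_sign_mul_abs_rpow_mul_right p g hxb
  rw [← intervalIntegral.integral_add_adjacent_intervals (hleft.congr_uIoo eqOn_left)
      (hright.neg.congr_uIoo eqOn_right),
    ← intervalIntegral.integral_congr_uIoo eqOn_left,
    ← intervalIntegral.integral_congr_uIoo eqOn_right, intervalIntegral.integral_neg,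
    sub_eq_add_neg]

end PrincipalValue

section ConstDiv

theorem image_pos_const_div_Ioo {K : Type*} [Field K] [LinearOrder K] [IsStrictOrderedRing K]
    {a b c : K} (hc : 0 < c) (ha : 0 < a) (hb : 0 < b) :
    (fun t => c / t) '' Ioo a b = Ioo (c / b) (c / a) := by
  ext y
  constructor
  · rintro ⟨t, ⟨hat, htb⟩, rfl⟩
    exact ⟨div_lt_div_of_pos_left hc (ha.trans hat) htb, div_lt_div_of_pos_left hc ha hat⟩
  · rintro ⟨hby, hya⟩
    have hy : 0 < y := (div_pos hc hb).trans hby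
    exact ⟨c / y, ⟨(lt_div_comm₀ hy ha).1 hya, (div_lt_comm₀ hb hy).1 hby⟩,
      div_div_cancel₀ hc.ne'⟩

theorem hasDerivAt_const_div {𝕜 : Type*} [NontriviallyNormedField 𝕜] (c : 𝕜) {t : 𝕜} (ht : t ≠ 0) :
    HasDerivAt (fun t => c / t) (-(c / t ^ 2)) t := by
  simpa [div_eq_mul_inv] using (hasDerivAt_inv ht).const_mul c

theorem injective_const_div {G : Type*} [CommGroupWithZero G] {c : G} (hc : c ≠ 0) :
    Function.Injective fun t : G => c / t :=
  fun t u (h : c / t = c / u) => by rw [← div_div_cancel₀ hc (b := t), h, div_div_cancel₀ hc]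

variable {a b c : ℝ} {E : Type*} [NormedAddCommGroup E] [NormedSpace ℝ E]

theorem intervalIntegrable_comp_const_div_iff (hc : 0 < c) (ha : 0 < a) (hab : a ≤ b) (f : ℝ → E) :
    IntervalIntegrable (fun t => (c / t ^ 2) • f (c / t)) volume a b ↔
      IntervalIntegrable f volume (c / b) (c / a) := by
  have hle : c / b ≤ c / a := by gcongr
  rw [intervalIntegrable_iff_integrableOn_Ioo_of_le hab,
    intervalIntegrable_iff_integrableOn_Ioo_of_le hle,
    ← image_pos_const_div_Ioo hc ha (ha.trans_le hab),
    integrableOn_image_iff_integrableOn_abs_deriv_smul measurableSet_Ioo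
      (fun t ht => (hasDerivAt_const_div c (ha.trans ht.1).ne').hasDerivWithinAt)
      (injective_const_div hc.ne').injOn]
  simp only [abs_neg, abs_of_nonneg (div_nonneg hc.le (sq_nonneg _))]

theorem integral_comp_const_div (hc : 0 < c) (ha : 0 < a) (hab : a ≤ b) (f : ℝ → E) :
    ∫ t in a..b, (c / t ^ 2) • f (c / t) = ∫ y in (c / b)..(c / a), f y := by
  have hle : c / b ≤ c / a := by gcongr
  rw [intervalIntegral.integral_of_le hab, intervalIntegral.integral_of_le hle,
    integral_Ioc_eq_integral_Ioo, integral_Ioc_eq_integral_Ioo,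
    ← image_pos_const_div_Ioo hc ha (ha.trans_le hab),
    integral_image_eq_integral_abs_deriv_smul measurableSet_Ioo
      (fun t ht => (hasDerivAt_const_div c (ha.trans ht.1).ne').hasDerivWithinAt)
      (injective_const_div hc.ne').injOn]
  simp only [abs_neg, abs_of_nonneg (div_nonneg hc.le (sq_nonneg _))]

end ConstDiv

section PowerSeries

variable {p x : ℝ}

theorem intervalIntegrable_rpow_sub_one_mul_pow (hp : 0 < p) (a b : ℝ) (k : ℕ) :
    IntervalIntegrable (fun t : ℝ => t ^ (p - 1) * t ^ k) volume a b :=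
  (intervalIntegral.intervalIntegrable_rpow' (by linarith)).mul_continuousOn
    (continuous_pow k).continuousOn

theorem integral_rpow_sub_one_mul_pow (hp : 0 < p) (hx : 0 < x) (k : ℕ) :
    ∫ t in (0 : ℝ)..x, t ^ (p - 1) * t ^ k = x ^ p * (x ^ k / (p + k)) := by
  have hpk : 0 < p + k := by positivity
  have rpow_add_sub_one : EqOn (fun t : ℝ => t ^ (p - 1) * t ^ k) (fun t => t ^ (p + k - 1))
      (Ioo 0 x) := fun t ht => by
    simp only [← Real.rpow_natCast t k, ← Real.rpow_add ht.1]
    ring_nf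
  rw [intervalIntegral.integral_congr_Ioo_of_le hx.le rpow_add_sub_one,
    integral_rpow (.inl (by linarith)), sub_add_cancel, Real.zero_rpow hpk.ne', sub_zero,
    Real.rpow_add hx, Real.rpow_natCast, mul_div_assoc]

theorem integral_norm_mul_rpow_sub_one_mul_pow (hp : 0 < p) (hx : 0 < x) (c : ℝ) (k : ℕ) :
    ∫ t in (0 : ℝ)..x, ‖c * (t ^ (p - 1) * t ^ k)‖ = |c| * (x ^ p * (x ^ k / (p + k))) := by
  rw [← integral_rpow_sub_one_mul_pow hp hx, ← intervalIntegral.integral_const_mul]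
  refine intervalIntegral.integral_congr_Ioo_of_le hx.le fun t ht => ?_
  have ht0 : 0 < t := ht.1
  simp only [norm_mul, Real.norm_eq_abs, abs_of_pos (Real.rpow_pos_of_pos ht0 _),
    abs_of_pos (pow_pos ht0 k)]

theorem summable_integral_norm_mul_rpow_sub_one_mul_pow {w : ℕ → ℝ} (hp : 0 < p) (hx : 0 < x)
    (hw : Summable fun k => w k * x ^ k) :
    Summable fun k => ∫ t in (0 : ℝ)..x, ‖w k * (t ^ (p - 1) * t ^ k)‖ := by
  simp only [integral_norm_mul_rpow_sub_one_mul_pow hp hx]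
  refine .of_nonneg_of_le (fun k => by positivity) (fun k => ?_) (hw.abs.mul_left (x ^ p / p))
  calc |w k| * (x ^ p * (x ^ k / (p + k)))
      ≤ |w k| * (x ^ p * (x ^ k / p)) := by gcongr; simp
    _ = x ^ p / p * |w k * x ^ k| := by rw [abs_mul, abs_of_pos (pow_pos hx k)]; ring

theorem hasSum_integral_rpow_sub_one_mul {w : ℕ → ℝ} {f : ℝ → ℝ} (hp : 0 < p) (hx : 0 < x)
    (hw : Summable fun k => w k * x ^ k)
    (hf : ∀ t ∈ Ioo 0 x, HasSum (fun k => w k * t ^ k) (f t)) :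
    HasSum (fun k : ℕ => w k / (p + k) * x ^ k)
      (x ^ (-p) * ∫ t in (0 : ℝ)..x, t ^ (p - 1) * f t) := by
  have termwise : HasSum (fun k => ∫ t in (0 : ℝ)..x, w k * (t ^ (p - 1) * t ^ k))
      (∫ t in (0 : ℝ)..x, ∑' k, w k * (t ^ (p - 1) * t ^ k)) := by
    have hint (k : ℕ) := (intervalIntegrable_rpow_sub_one_mul_pow hp 0 x k).const_mul (w k)
    have hsum := summable_integral_norm_mul_rpow_sub_one_mul_pow hp hx hw
    simp only [intervalIntegral.integral_of_le hx.le] at hsum ⊢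
    exact hasSum_integral_of_summable_integral_norm (fun k => (hint k).1) hsum
  have sum_eq : EqOn (fun t => ∑' k, w k * (t ^ (p - 1) * t ^ k)) (fun t => t ^ (p - 1) * f t)
      (Ioo 0 x) := fun t ht => by
    simpa only [mul_left_comm] using ((hf t ht).mul_left (t ^ (p - 1))).tsum_eq
  rw [intervalIntegral.integral_congr_Ioo_of_le hx.le sum_eq] at termwise
  refine (termwise.mul_left (x ^ (-p))).congr_fun fun k => ?_
  rw [intervalIntegral.integral_const_mul, integral_rpow_sub_one_mul_pow hp hx,
    Real.rpow_neg hx.le]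
  field_simp

end PowerSeries

section Binomial

theorem Gamma_add_natCast_div_Gamma {c : ℝ} (hc : ∀ k : ℕ, c ≠ -k) (n : ℕ) :
    Real.Gamma (c + n) / Real.Gamma c = (ascPochhammer ℝ n).eval c := by
  have h := Complex.Gamma_add_nat_div_Gamma_eq (n := n) c fun k => by exact_mod_cast hc k
  rw [← ascPochhammer_map Complex.ofRealHom, ← Complex.ofRealHom_eq_coe,
    Polynomial.eval_map_apply] at h
  apply Complex.ofReal_injective
  push_cast [← Complex.Gamma_ofReal]
  exact h

theorem choose_add_natCast_sub_one {K : Type*} [Field K] [CharZero K] [BinomialRing K] (c : K)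
    (k : ℕ) : Ring.choose (c + k - 1) k = (ascPochhammer K k).eval c / k ! := by
  have h := Ring.factorial_nsmul_multichoose_eq_ascPochhammer c k
  rw [Ring.multichoose_eq, Polynomial.ascPochhammer_smeval_eq_eval, nsmul_eq_mul] at h
  rw [← h, mul_div_cancel_left₀ _ (Nat.cast_ne_zero.2 k.factorial_ne_zero)]

theorem hasSum_one_sub_rpow_neg (c : ℝ) {t : ℝ} (ht : |t| < 1) :
    HasSum (fun k : ℕ => (ascPochhammer ℝ k).eval c / k ! * t ^ k) ((1 - t) ^ (-c)) := by
  have h := (Real.one_div_one_sub_rpow_hasFPowerSeriesOnBall_zero c).hasSum (y := t)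
    (by simpa [← ofReal_norm] using ht)
  simpa only [zero_add, FormalMultilinearSeries.ofScalars_apply_eq, smul_eq_mul, one_div,
    choose_add_natCast_sub_one, ← Real.rpow_neg (sub_pos.2 (abs_lt.1 ht).2).le] using h

end Binomial

/-- The incomplete Beta function `B_x(a, b)`; its value at `x = 1` is Euler's `B(a, b)`. -/
noncomputable def incompleteBeta (a b x : ℝ) : ℝ :=
  ∫ t in (0 : ℝ)..x, t ^ (a - 1) * (1 - t) ^ (b - 1)

section IncompleteBeta

variable {a b x : ℝ}

theorem ofReal_betaIntegrand (a b : ℝ) {t : ℝ} (ht : t ∈ uIoo (0 : ℝ) 1) :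
    (t : ℂ) ^ ((a : ℂ) - 1) * (1 - (t : ℂ)) ^ ((b : ℂ) - 1) =
      ((t ^ (a - 1) * (1 - t) ^ (b - 1) : ℝ) : ℂ) := by
  rw [uIoo_of_le zero_le_one] at ht
  push_cast [Complex.ofReal_cpow ht.1.le, Complex.ofReal_cpow (sub_pos.2 ht.2).le]
  rfl

theorem intervalIntegrable_betaIntegrand (ha : 0 < a) (hb : 0 < b) :
    IntervalIntegrable (fun t : ℝ => t ^ (a - 1) * (1 - t) ^ (b - 1)) volume 0 1 := by
  have h := (Complex.betaIntegral_convergent (u := a) (v := b) (by simpa) (by simpa)).congr_uIoo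
    fun _ => ofReal_betaIntegrand a b
  rw [intervalIntegrable_iff] at h ⊢
  exact h.re

theorem intervalIntegrable_betaIntegrand_of_mem_Icc {u v : ℝ} (ha : 0 < a) (hb : 0 < b)
    (hu : u ∈ Icc (0 : ℝ) 1) (hv : v ∈ Icc (0 : ℝ) 1) :
    IntervalIntegrable (fun t : ℝ => t ^ (a - 1) * (1 - t) ^ (b - 1)) volume u v := by
  rw [← uIcc_of_le zero_le_one] at hu hv
  exact (intervalIntegrable_betaIntegrand ha hb).mono_set (uIcc_subset_uIcc hu hv)

theorem incompleteBeta_one_sub (ha : 0 < a) (hb : 0 < b) (hx : x ∈ Icc (0 : ℝ) 1) :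
    incompleteBeta a b 1 - incompleteBeta a b x =
      ∫ t in x..1, t ^ (a - 1) * (1 - t) ^ (b - 1) :=
  intervalIntegral.integral_interval_sub_left (intervalIntegrable_betaIntegrand ha hb)
    (intervalIntegrable_betaIntegrand_of_mem_Icc ha hb (left_mem_Icc.2 zero_le_one) hx)

theorem incompleteBeta_one (ha : 0 < a) (hb : 0 < b) :
    incompleteBeta a b 1 = Real.Gamma a * Real.Gamma b / Real.Gamma (a + b) := by
  rw [← ProbabilityTheory.beta, ProbabilityTheory.beta_eq_betaIntegralReal a b ha hb,
    Complex.betaIntegral,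
    intervalIntegral.integral_congr_uIoo fun _ => ofReal_betaIntegrand a b,
    intervalIntegral.integral_ofReal, Complex.ofReal_re, incompleteBeta]

theorem hasSum_incompleteBeta (ha : 0 < a) (b : ℝ) (hx : x ∈ Ioo (0 : ℝ) 1) :
    HasSum (fun k : ℕ => (ascPochhammer ℝ k).eval (1 - b) / k ! / (a + k) * x ^ k)
      (x ^ (-a) * incompleteBeta a b x) := by
  have binomial {t : ℝ} (ht0 : 0 < t) (ht1 : t < 1) :=
    hasSum_one_sub_rpow_neg (1 - b) (abs_lt.2 ⟨by linarith, ht1⟩)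
  simp only [neg_sub] at binomial
  exact hasSum_integral_rpow_sub_one_mul ha hx.1 (binomial hx.1 hx.2).summable
    fun t ht => binomial ht.1 (ht.2.trans hx.2)

theorem eqOn_sub_rpow_mul_rpow_comp_mul (a b : ℝ) (hx : 0 < x) :
    EqOn (fun t => (x - x * t) ^ (b - 1) * (x * t) ^ (a - 1))
      (fun t => x ^ (a + b - 2) * (t ^ (a - 1) * (1 - t) ^ (b - 1))) (uIoo 0 1) := by
  intro t ht
  rw [uIoo_of_le zero_le_one] at ht
  have hxt : x - x * t = x * (1 - t) := by ring
  have hexp : a + b - 2 = (b - 1) + (a - 1) := by ring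
  simp only [hxt, hexp, Real.mul_rpow hx.le (sub_pos.2 ht.2).le, Real.mul_rpow hx.le ht.1.le,
    Real.rpow_add hx]
  ring

theorem intervalIntegrable_sub_rpow_mul_rpow_left (ha : 0 < a) (hb : 0 < b) (hx : 0 < x) :
    IntervalIntegrable (fun y => (x - y) ^ (b - 1) * y ^ (a - 1)) volume 0 x := by
  rw [← IntervalIntegrable.comp_mul_left_iff hx.ne', zero_div, div_self hx.ne']
  exact ((intervalIntegrable_betaIntegrand ha hb).const_mul _).congr_uIoo
    (eqOn_sub_rpow_mul_rpow_comp_mul a b hx).symm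

theorem integral_sub_rpow_mul_rpow_left (a b : ℝ) (hx : 0 < x) :
    ∫ y in (0 : ℝ)..x, (x - y) ^ (b - 1) * y ^ (a - 1) =
      x ^ (a + b - 1) * incompleteBeta a b 1 := by
  have rescale := intervalIntegral.mul_integral_comp_mul_left
    (f := fun y => (x - y) ^ (b - 1) * y ^ (a - 1)) (a := 0) (b := 1) (c := x)
  have hexp : a + b - 1 = 1 + (a + b - 2) := by ring
  rw [mul_zero, mul_one] at rescale
  rw [← rescale, intervalIntegral.integral_congr_uIoo (eqOn_sub_rpow_mul_rpow_comp_mul a b hx),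
    intervalIntegral.integral_const_mul, ← mul_assoc, hexp, Real.rpow_add hx, Real.rpow_one,
    incompleteBeta]

theorem eqOn_sub_rpow_mul_rpow_comp_div (a b : ℝ) (hx : x ∈ Ioo (0 : ℝ) 1) :
    EqOn (fun t => (x / t ^ 2) • ((x / t - x) ^ (b - 1) * (x / t) ^ (a - 1)))
      (fun t => x ^ (a + b - 1) * (t ^ (1 - a - b - 1) * (1 - t) ^ (b - 1))) (uIoo x 1) := by
  intro t ht
  rw [uIoo_of_le hx.2.le] at ht
  have hx0 : 0 < x := hx.1
  have ht0 : 0 < t := hx0.trans ht.1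
  have ht1 : 0 < 1 - t := sub_pos.2 ht.2
  have hxt : x / t - x = x * (1 - t) / t := by field_simp
  have hx_exp : a + b - 1 = 1 + (b - 1) + (a - 1) := by ring
  have ht_exp : 1 - a - b - 1 = -(2 : ℕ) + -(b - 1) + -(a - 1) := by push_cast; ring
  simp only [hxt, hx_exp, ht_exp, Real.div_rpow (mul_pos hx0 ht1).le ht0.le,
    Real.div_rpow hx0.le ht0.le, Real.mul_rpow hx0.le ht1.le, Real.rpow_add hx0, Real.rpow_add ht0,
    Real.rpow_neg ht0.le, Real.rpow_natCast, Real.rpow_one, smul_eq_mul]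
  ring

theorem intervalIntegrable_sub_rpow_mul_rpow_right (hab : a + b < 1) (hb : 0 < b)
    (hx : x ∈ Ioo (0 : ℝ) 1) :
    IntervalIntegrable (fun y => (y - x) ^ (b - 1) * y ^ (a - 1)) volume x 1 := by
  have hbeta := intervalIntegrable_betaIntegrand_of_mem_Icc (a := 1 - a - b) (by linarith) hb
    (mem_Icc_of_Ioo hx) (right_mem_Icc.2 zero_le_one)
  have invert := intervalIntegrable_comp_const_div_iff hx.1 hx.1 hx.2.le
    fun y => (y - x) ^ (b - 1) * y ^ (a - 1)
  rw [div_one, div_self hx.1.ne'] at invert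
  exact invert.1 ((hbeta.const_mul _).congr_uIoo (eqOn_sub_rpow_mul_rpow_comp_div a b hx).symm)

theorem integral_sub_rpow_mul_rpow_right (hab : a + b < 1) (hb : 0 < b) (hx : x ∈ Ioo (0 : ℝ) 1) :
    ∫ y in x..1, (y - x) ^ (b - 1) * y ^ (a - 1) =
      x ^ (a + b - 1) * (incompleteBeta (1 - a - b) b 1 - incompleteBeta (1 - a - b) b x) := by
  have invert := integral_comp_const_div hx.1 hx.1 hx.2.le
    fun y => (y - x) ^ (b - 1) * y ^ (a - 1)
  rw [div_one, div_self hx.1.ne'] at invert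
  rw [← invert, intervalIntegral.integral_congr_uIoo (eqOn_sub_rpow_mul_rpow_comp_div a b hx),
    intervalIntegral.integral_const_mul,
    incompleteBeta_one_sub (by linarith) hb (mem_Icc_of_Ioo hx)]

end IncompleteBeta

theorem npv_of_intervalIntegrable {s α x : ℝ}
    (h : IntervalIntegrable (fun y => Real.sign (x - y) * |x - y| ^ (-(2 * s)) * y ^ (α - 1))
      volume 0 1) :
    Npv s α x (∫ y in (0 : ℝ)..1, Real.sign (x - y) * |x - y| ^ (-(2 * s)) * y ^ (α - 1)) := by
  rw [intervalIntegrable_iff_integrableOn_Ioo_of_le zero_le_one] at h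
  rw [intervalIntegral.integral_of_le zero_le_one, integral_Ioc_eq_integral_Ioo]
  simpa only [Npv, Real.ball_eq_Ioo] using tendsto_setIntegral_diff_ball h x

theorem npv_incompleteBeta {s α x : ℝ} (hs : s < 1 / 2) (hα : 0 < α) (hα' : α < 2 * s)
    (hx : x ∈ Ioo (0 : ℝ) 1) :
    Npv s α x (x ^ (α - 2 * s) *
      (incompleteBeta α (1 - 2 * s) 1 - (incompleteBeta (2 * s - α) (1 - 2 * s) 1
        - incompleteBeta (2 * s - α) (1 - 2 * s) x))) := by
  have hb : 0 < 1 - 2 * s := by linarith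
  have hab : α + (1 - 2 * s) < 1 := by linarith
  have hleft := intervalIntegrable_sub_rpow_mul_rpow_left hα hb hx.1
  have hright := intervalIntegrable_sub_rpow_mul_rpow_right hab hb hx
  have hexp : 1 - 2 * s - 1 = -(2 * s) := by ring
  have hpow : α + (1 - 2 * s) - 1 = α - 2 * s := by ring
  have hcompl : 1 - α - (1 - 2 * s) = 2 * s - α := by ring
  have hint := intervalIntegrable_sign_mul_abs_rpow_mul hx.1.le hx.2.le hleft hright
  have hval := integral_sign_mul_abs_rpow_mul hx.1.le hx.2.le hleft hright
  rw [integral_sub_rpow_mul_rpow_left α _ hx.1, integral_sub_rpow_mul_rpow_right hab hb hx,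
    ← mul_sub, hexp, hpow, hcompl] at hval
  rw [hexp] at hint
  exact hval ▸ npv_of_intervalIntegrable hint

theorem stmt4 (s α x : ℝ) (hs : 0 < s) (hs' : s < 1 / 2) (hα : 0 < α) (hα' : α < 2 * s)
    (hx : x ∈ Set.Ioo (0 : ℝ) 1) :
    ∃ S : ℝ,
      HasSum
        (fun k : ℕ =>
          (Real.Gamma (2 * s + k) / Real.Gamma (2 * s)) / (2 * s - α + k) * x ^ k
            / (k.factorial : ℝ)) S ∧
      Npv s α x (x ^ (α - 2 * s) *
        (Real.Gamma α * Real.Gamma (1 - 2 * s) / Real.Gamma (1 + α - 2 * s)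
          - Real.Gamma (1 - 2 * s) * Real.Gamma (2 * s - α) / Real.Gamma (1 - α)) + S) := by
  have hb : 0 < 1 - 2 * s := by linarith
  have ha : 0 < 2 * s - α := by linarith
  have h2s (n : ℕ) : 2 * s ≠ -n := ne_of_gt (by linarith [n.cast_nonneg (α := ℝ)])
  refine ⟨x ^ (-(2 * s - α)) * incompleteBeta (2 * s - α) (1 - 2 * s) x, ?_, ?_⟩
  · refine (hasSum_incompleteBeta ha (1 - 2 * s) hx).congr_fun fun k => ?_
    rw [sub_sub_cancel, Gamma_add_natCast_div_Gamma h2s]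
    ring
  · convert npv_incompleteBeta hs' hα hα' hx using 1
    rw [incompleteBeta_one hα hb, incompleteBeta_one ha hb, neg_sub]
    ring_nf
end
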